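/- Let G be a finite r-regular graph with girth g, equipped with a random label assignment with probabilities (p₀,p), and let i ≥ 1 with 2i < g−3 and 2(i+2) < g−2. Then for any vertex u: P(u ∈ B_i | u ∈ B_{i−1}) = (1−p)·(1 − r·p·t_{i−1}/((r−1)·b_{i−1}))^{r−1}. -/

import Mathlib

open MeasureTheory ProbabilityTheory Filter Set

namespace InducedForest

variable {V : Type*}

/-- Label `i` is *relevant* for vertex `v` (w.r.t. the label assignment `S`):
either `i = 0` and `0 ∈ S v`, or `i ∈ S v`, no `j < i` is relevant for `v`, and
there is a unique neighbour of `v` having a relevant label strictly smaller than `i`. -/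
def Relevant (G : SimpleGraph V) (S : V → Set ℕ) (i : ℕ) : V → Prop :=
  Nat.strongRecOn i (fun i ih v =>
    (i = 0 ∧ 0 ∈ S v) ∨
    (i ∈ S v ∧ (∀ j, (h : j < i) → ¬ ih j h v) ∧
      (∃! u, G.Adj v u ∧ ∃ j, ∃ h : j < i, ih j h u)))

/-- `v` has some relevant label `≤ l`, i.e. `v ∈ R_{≤ l}`. -/
def RelevantLe (G : SimpleGraph V) (S : V → Set ℕ) (l : ℕ) (v : V) : Prop :=
  ∃ i ≤ l, Relevant G S i v

inductive Colour | white | blue | orange | purple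
deriving DecidableEq

open Classical in
/-- The colour of `u` at time `l`. -/
noncomputable def colourAt (G : SimpleGraph V) (S : V → Set ℕ) (l : ℕ) (u : V) : Colour :=
  if RelevantLe G S l u then Colour.purple
  else if ∀ v, G.Adj u v → ¬ RelevantLe G S l v then Colour.white
  else if ∃! v, G.Adj u v ∧ RelevantLe G S l v then Colour.blue
  else Colour.orange

/-- The set `W_l` of white vertices at time `l`. -/
def White (G : SimpleGraph V) (S : V → Set ℕ) (l : ℕ) : Set V :=
  {u | ¬ RelevantLe G S l u ∧ ∀ v, G.Adj u v → ¬ RelevantLe G S l v}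

/-- The set `B_l` of blue vertices at time `l`. -/
def Blue (G : SimpleGraph V) (S : V → Set ℕ) (l : ℕ) : Set V :=
  {u | ¬ RelevantLe G S l u ∧ ∃! v, G.Adj u v ∧ RelevantLe G S l v}
/-- The label assignment determined by a sample point `ω`. -/
def labels (ω : V → ℕ → Bool) : V → Set ℕ := fun v => {i | ω v i = true}

/-- `μ` is the random label assignment with probabilities `(p₀, p)`: the events
`i ∈ S(v)` are mutually independent, and each has probability `p₀` if `i = 0`
and `p` if `i ≥ 1`. -/
def IsLabelMeasure (μ : Measure (V → ℕ → Bool)) (p₀ p : ℝ) : Prop :=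
  IsProbabilityMeasure μ ∧
  iIndepSet (fun q : V × ℕ => {ω : V → ℕ → Bool | ω q.1 q.2 = true}) μ ∧
  ∀ (v : V) (i : ℕ), μ {ω | ω v i = true} = ENNReal.ofReal (if i = 0 then p₀ else p)

/-- Event that `u` is white at time `l`. -/
def WEv (G : SimpleGraph V) (l : ℕ) (u : V) : Set (V → ℕ → Bool) :=
  {ω | u ∈ White G (labels ω) l}

/-- Event that `u` is blue at time `l`. -/
def BEv (G : SimpleGraph V) (l : ℕ) (u : V) : Set (V → ℕ → Bool) :=
  {ω | u ∈ Blue G (labels ω) l}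

/-- Event that `u` has relevant label `i`, i.e. `u ∈ R_i`. -/
def REv (G : SimpleGraph V) (i : ℕ) (u : V) : Set (V → ℕ → Bool) :=
  {ω | Relevant G (labels ω) i u}

/-- Event that `u` has a relevant label `≤ l`, i.e. `u ∈ R_{≤ l}`. -/
def RLeEv (G : SimpleGraph V) (l : ℕ) (u : V) : Set (V → ℕ → Bool) :=
  {ω | RelevantLe G (labels ω) l u}

/-- `G` is `r`-regular. -/
def IsRegular (G : SimpleGraph V) (r : ℕ) : Prop :=
  ∀ v : V, (G.neighborSet v).ncard = r

/-!
Balls of radius less than half the girth are trees, so up to the times in question the branches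
hanging off a vertex `v` evolve independently of each other and of the labels at `v`. In a branch
the label `k` becomes relevant with a probability `f k` that does not depend on the branch, by
regularity. A vertex is blue precisely when one of its branches has produced a relevant label, all
others are silent and the vertex has not responded. Writing `A` for the probability that a given
branch does so while `v` stays quiet, and `q` for the probability that a branch is silent, this
gives `b = r A q ^ (r - 1)`, and one more step multiplies `A` by `1 - p` and replaces `q` by
`q - f (n + 1)`. Adjacent vertices are both blue precisely when each is blue because of its own
`r - 1` remaining branches, so `t = β ^ 2` for `β = (r - 1) A q ^ (r - 2)`, whereas
`f (n + 1) = p β`. Hence `f (n + 1) / q = r p t / ((r - 1) b)`.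
-/

section Deterministic

variable {G : SimpleGraph V} {S : V → Set ℕ} {N : Set V} {i j k n : ℕ} {u v w : V}

/-- Relevance of the label `i` for `v` when `v` listens only to the vertices in `N`, each of which
listens to all its neighbours except the one it reports to. On a tree this is relevance in the
component of `v` that remains after deleting the edges from `v` to vertices outside `N`. -/
def RelevantVia (G : SimpleGraph V) (S : V → Set ℕ) : ℕ → Set V → V → Prop
  | i, N, v => (i = 0 ∧ 0 ∈ S v) ∨
      (i ∈ S v ∧ (∀ j, (_ : j < i) → ¬ RelevantVia G S j N v) ∧
        ∃! w, w ∈ N ∧ ∃ j, ∃ _ : j < i, RelevantVia G S j (G.neighborSet w \ {v}) w)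

/-- Relevance of `i` for `v` in the branch at `v` that points away from its neighbour `u`. -/
abbrev BranchRelevant (G : SimpleGraph V) (S : V → Set ℕ) (i : ℕ) (u v : V) : Prop :=
  RelevantVia G S i (G.neighborSet v \ {u}) v

/-- The analogue of `v ∈ B_n` when `v` listens only to the vertices in `N`. -/
def BlueVia (G : SimpleGraph V) (S : V → Set ℕ) (N : Set V) (n : ℕ) (v : V) : Prop :=
  (∀ j ≤ n, ¬ RelevantVia G S j N v) ∧ ∃! w, w ∈ N ∧ ∃ j ≤ n, BranchRelevant G S j v w

/-- `v` carries none of the labels that become relevant by time `m` when exactly one neighbour of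
`v` acquires a relevant label and does so at time `k`. -/
def QuietFrom (S : V → Set ℕ) (k m : ℕ) (v : V) : Prop :=
  0 ∉ S v ∧ ∀ j, k < j → j ≤ m → j ∉ S v

/-- At time `m`, the vertex `v` is blue through `x`: among the branches at the vertices of `N` only
that of `x` has produced a relevant label, namely `k`, and `v` has not responded. -/
def BlueThrough (G : SimpleGraph V) (S : V → Set ℕ) (N : Set V) (m : ℕ) (v x : V) (k : ℕ) : Prop :=
  BranchRelevant G S k v x ∧ QuietFrom S k m v ∧
    ∀ y ∈ N, y ≠ x → ∀ j ≤ m, ¬ BranchRelevant G S j v y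

lemma relevant_iff :
    Relevant G S i v ↔ (i = 0 ∧ 0 ∈ S v) ∨ (i ∈ S v ∧ (∀ j < i, ¬ Relevant G S j v) ∧
      ∃! u, G.Adj v u ∧ ∃ j < i, Relevant G S j u) := by
  rw [Relevant, Nat.strongRecOn_eq]
  simp only [Relevant, exists_prop]

lemma relevantVia_iff :
    RelevantVia G S i N v ↔ (i = 0 ∧ 0 ∈ S v) ∨ (i ∈ S v ∧ (∀ j < i, ¬ RelevantVia G S j N v) ∧
      ∃! w, w ∈ N ∧ ∃ j < i, BranchRelevant G S j v w) := by
  rw [RelevantVia]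
  simp only [exists_prop]

lemma relevantVia_zero : RelevantVia G S 0 N v ↔ 0 ∈ S v := by
  simp [relevantVia_iff (i := 0)]

lemma relevantVia_succ : RelevantVia G S (n + 1) N v ↔ n + 1 ∈ S v ∧ BlueVia G S N n v := by
  simp [relevantVia_iff (i := n + 1), BlueVia]

lemma RelevantVia.mem (h : RelevantVia G S i N v) : i ∈ S v := by
  cases i with
  | zero => exact relevantVia_zero.1 h
  | succ n => exact (relevantVia_succ.1 h).1

lemma RelevantVia.eq (hi : RelevantVia G S i N v) (hj : RelevantVia G S j N v) : i = j := by
  wlog hij : i < j generalizing i j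
  · rcases (not_lt.1 hij).eq_or_lt with h | h
    exacts [h.symm, (this hj hi h).symm]
  obtain ⟨n, rfl⟩ := Nat.exists_eq_add_one_of_ne_zero (Nat.ne_zero_of_lt hij)
  exact absurd hi ((relevantVia_succ.1 hj).2.1 i (Nat.lt_succ_iff.1 hij))

lemma relevant_iff_branchRelevant (huv : G.Adj u v) (hu : ∀ j < k, ¬ Relevant G S j u) :
    Relevant G S k v ↔ BranchRelevant G S k u v := by
  induction k using Nat.strong_induction_on generalizing u v with
  | _ k ih =>
    rw [relevant_iff, BranchRelevant, relevantVia_iff]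
    refine or_congr_right (and_congr_right fun _ => ?_)
    have hv : (∀ j < k, ¬ Relevant G S j v) ↔ ∀ j < k, ¬ BranchRelevant G S j u v :=
      forall₂_congr fun j hj => not_congr (ih j hj huv fun i hi => hu i (hi.trans hj))
    rw [← hv]
    refine and_congr_right fun hv => existsUnique_congr fun w => ?_
    have hw (hvw : G.Adj v w) :
        (∃ j < k, Relevant G S j w) ↔ ∃ j < k, BranchRelevant G S j v w :=
      exists_congr fun j => and_congr_right fun hj => ih j hj hvw fun i hi => hv i (hi.trans hj)
    constructor
    · rintro ⟨hvw, h⟩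
      refine ⟨⟨hvw, ?_⟩, (hw hvw).1 h⟩
      rintro rfl
      obtain ⟨j, hj, hr⟩ := h
      exact hu j hj hr
    · rintro ⟨⟨hvw, -⟩, h⟩
      exact ⟨hvw, (hw hvw).2 h⟩

lemma relevant_iff_relevantVia : Relevant G S k v ↔ RelevantVia G S k (G.neighborSet v) v := by
  induction k using Nat.strong_induction_on with
  | _ k ih =>
    rw [relevant_iff, relevantVia_iff, ← forall₂_congr fun j hj => not_congr (ih j hj)]
    refine or_congr_right (and_congr_right fun _ => and_congr_right fun hv =>
      existsUnique_congr fun w => and_congr_right fun hvw => exists_congr fun j =>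
        and_congr_right fun hj => ?_)
    exact relevant_iff_branchRelevant hvw fun i hi => hv i (hi.trans hj)

lemma mem_blue_iff_blueVia : u ∈ Blue G S n ↔ BlueVia G S (G.neighborSet u) n u := by
  have hu : ¬ RelevantLe G S n u ↔ ∀ j ≤ n, ¬ RelevantVia G S j (G.neighborSet u) u := by
    simp [RelevantLe, relevant_iff_relevantVia]
  rw [BlueVia, ← hu]
  refine and_congr_right fun hu => existsUnique_congr fun w => and_congr_right fun huw =>
    exists_congr fun j => and_congr_right fun hj => ?_
  exact relevant_iff_branchRelevant huw fun i hi h => hu ⟨i, hi.le.trans hj, h⟩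

lemma blueVia_iff_blueThrough :
    BlueVia G S N n v ↔ ∃ x ∈ N, ∃ k ≤ n, BlueThrough G S N n v x k := by
  constructor
  · rintro ⟨hv, x, ⟨hx, k, hk, hxk⟩, hunique⟩
    refine ⟨x, hx, k, hk, hxk, ⟨fun h0 => hv 0 n.zero_le (relevantVia_zero.2 h0),
      fun j hkj hj hjS => hv j hj ?_⟩, fun y hy hyx j hj h => hyx (hunique y ⟨hy, j, hj, h⟩)⟩
    refine relevantVia_iff.2 (.inr ⟨hjS, fun i hi => hv i (hi.le.trans hj), x,
      ⟨hx, k, hkj, hxk⟩, ?_⟩)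
    rintro y ⟨hy, i, hi, h⟩
    exact hunique y ⟨hy, i, hi.le.trans hj, h⟩
  · rintro ⟨x, hx, k, hk, hxk, ⟨h0, hquiet⟩, hsilent⟩
    have hsole : ∀ y ∈ N, ∀ j ≤ n, BranchRelevant G S j v y → y = x := fun y hy j hj h =>
      by_contra fun hyx => hsilent y hy hyx j hj h
    refine ⟨fun j hj h => ?_, x, ⟨hx, k, hk, hxk⟩, fun y ⟨hy, j, hj, h⟩ => hsole y hy j hj h⟩
    cases j with
    | zero => exact h0 h.mem
    | succ j =>
      obtain ⟨-, -, y, ⟨hy, i, hi, hyi⟩, -⟩ := relevantVia_succ.1 h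
      obtain rfl := hsole y hy i (by omega) hyi
      exact hquiet (j + 1) (by have := hxk.eq hyi; omega) hj h.mem

lemma blueVia_and_blueVia_succ_iff :
    BlueVia G S N n v ∧ BlueVia G S N (n + 1) v ↔
      ∃ x ∈ N, ∃ k ≤ n, BlueThrough G S N (n + 1) v x k := by
  simp only [blueVia_iff_blueThrough]
  constructor
  · rintro ⟨⟨x, hx, k, hk, hxk, -⟩, y, hy, l, -, hyl, hquiet, hsilent⟩
    obtain rfl : x = y := by_contra fun hxy => hsilent x hx hxy k (by omega) hxk
    obtain rfl := hxk.eq hyl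
    exact ⟨x, hx, k, hk, hxk, hquiet, hsilent⟩
  · rintro ⟨x, hx, k, hk, hxk, ⟨h0, hquiet⟩, hsilent⟩
    exact ⟨⟨x, hx, k, hk, hxk, ⟨h0, fun j hkj hj => hquiet j hkj (by omega)⟩,
      fun y hy hyx j hj => hsilent y hy hyx j (by omega)⟩,
      x, hx, k, by omega, hxk, ⟨h0, hquiet⟩, hsilent⟩

lemma blueVia_sdiff_singleton (hw : ∀ j ≤ n, ¬ BranchRelevant G S j v w) :
    BlueVia G S (N \ {w}) n v ↔ BlueVia G S N n v := by
  simp only [blueVia_iff_blueThrough]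
  constructor
  · rintro ⟨x, hx, k, hk, hxk, hquiet, hsilent⟩
    refine ⟨x, hx.1, k, hk, hxk, hquiet, fun y hy hyx => ?_⟩
    by_cases hyw : y = w
    · exact hyw ▸ hw
    · exact hsilent y ⟨hy, hyw⟩ hyx
  · rintro ⟨x, hx, k, hk, hxk, hquiet, hsilent⟩
    exact ⟨x, ⟨hx, fun hxw => hw k hk (hxw ▸ hxk)⟩, k, hk, hxk, hquiet,
      fun y hy => hsilent y hy.1⟩

/-- Neither endpoint influences the other as long as both stay irrelevant. -/
lemma mem_blue_and_mem_blue_iff (huv : G.Adj u v) :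
    u ∈ Blue G S n ∧ v ∈ Blue G S n ↔
      BlueVia G S (G.neighborSet u \ {v}) n u ∧ BlueVia G S (G.neighborSet v \ {u}) n v := by
  simp only [mem_blue_iff_blueVia]
  constructor
  · rintro ⟨hu, hv⟩
    have hvu : ∀ j ≤ n, ¬ BranchRelevant G S j v u := fun j hj h => hu.1 j hj <|
      relevant_iff_relevantVia.1 <| (relevant_iff_branchRelevant huv.symm fun i hi h' =>
        hv.1 i (hi.le.trans hj) (relevant_iff_relevantVia.1 h')).2 h
    have huv' : ∀ j ≤ n, ¬ BranchRelevant G S j u v := fun j hj h => hv.1 j hj <|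
      relevant_iff_relevantVia.1 <| (relevant_iff_branchRelevant huv fun i hi h' =>
        hu.1 i (hi.le.trans hj) (relevant_iff_relevantVia.1 h')).2 h
    exact ⟨(blueVia_sdiff_singleton huv').2 hu, (blueVia_sdiff_singleton hvu).2 hv⟩
  · rintro ⟨hu, hv⟩
    exact ⟨(blueVia_sdiff_singleton hv.1).1 hu, (blueVia_sdiff_singleton hu.1).1 hv⟩

end Deterministic

section Girth

variable {G : SimpleGraph V} {g k l : ℕ} {u v w x y : V}

lemma eq_of_isPath_of_length_add_lt (hg : (g : ℕ∞) ≤ G.egirth) {q q' : G.Walk u v}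
    (hq : q.IsPath) (hq' : q'.IsPath) (h : q.length + q'.length < g) : q = q' := by
  by_contra hne
  obtain ⟨w, -, -, c, hc, hlen⟩ := hq.exists_isCycle_length_le_add_of_ne hq' hne
  have : (g : ℕ∞) ≤ c.length := hg.trans (SimpleGraph.egirth_le_length hc)
  have : g ≤ c.length := by exact_mod_cast this
  omega

/-- The vertices within distance `k` of `v` in the branch at `v` that points away from `u`: they
carry the labels on which the relevance of `0, …, k` in that branch depends. -/
def branch (G : SimpleGraph V) (k : ℕ) (u v : V) : Set V :=
  {z | ∃ q : G.Walk v z, q.IsPath ∧ u ∉ q.support ∧ q.length ≤ k}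

lemma branch_mono (h : k ≤ l) : branch G k u v ⊆ branch G l u v :=
  fun _ ⟨q, hq, hu, hk⟩ => ⟨q, hq, hu, hk.trans h⟩

lemma self_mem_branch (huv : u ≠ v) : v ∈ branch G k u v :=
  ⟨.nil, .nil, by simpa using huv, by simp⟩

lemma notMem_branch : u ∉ branch G k u v :=
  fun ⟨q, _, hu, _⟩ => hu q.end_mem_support

lemma branch_subset_branch (hg : (g : ℕ∞) ≤ G.egirth) (hk : k + 2 < g) (huv : G.Adj u v)
    (hvw : G.Adj v w) (hwu : w ≠ u) : branch G k v w ⊆ branch G (k + 1) u v := by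
  classical
  rintro z ⟨q, hq, hv, hlen⟩
  refine ⟨q.cons hvw, hq.cons hv, ?_, by simpa using hlen⟩
  rw [SimpleGraph.Walk.support_cons, List.mem_cons, not_or]
  refine ⟨huv.ne, fun hu => ?_⟩
  -- Otherwise `v, w, …, u` is a path from `v` to `u` other than the edge `v, u`.
  have hpath : ((q.takeUntil u hu).cons hvw).IsPath :=
    (hq.takeUntil hu).cons fun h => hv (q.support_takeUntil_subset_support hu h)
  have := q.length_takeUntil_le_length hu
  have heq := eq_of_isPath_of_length_add_lt hg hpath (.of_adj huv.symm) (by simp; omega)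
  have : w ∈ huv.symm.toWalk.support := by
    rw [← heq]
    simp
  simp [hvw.ne', hwu] at this

lemma disjoint_branch (hg : (g : ℕ∞) ≤ G.egirth) (hk : 2 * (k + 1) < g) (hvx : G.Adj v x)
    (hvy : G.Adj v y) (hxy : x ≠ y) : Disjoint (branch G k v x) (branch G k v y) := by
  refine Set.disjoint_left.2 ?_
  rintro z ⟨q, hq, hv, hlen⟩ ⟨q', hq', hv', hlen'⟩
  have := eq_of_isPath_of_length_add_lt hg (hq.cons hv (h := hvx)) (hq'.cons hv' (h := hvy))
    (by simp; omega)
  simp_all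

lemma disjoint_branch_symm (hg : (g : ℕ∞) ≤ G.egirth) (hk : 2 * k + 1 < g) (huv : G.Adj u v) :
    Disjoint (branch G k u v) (branch G k v u) := by
  refine Set.disjoint_left.2 ?_
  rintro z ⟨q, hq, hu, hlen⟩ ⟨q', hq', hv, hlen'⟩
  have := eq_of_isPath_of_length_add_lt hg (hq.cons hu (h := huv)) hq' (by simp; omega)
  rw [← this] at hv
  simp at hv

end Girth

section LabelSpace

variable {μ : Measure (V → ℕ → Bool)} {p₀ p : ℝ} {Q R : Set (V × ℕ)} {E F : Set (V → ℕ → Bool)}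
  {i k m n : ℕ} {u v x : V}

/-- The `σ`-algebra of the events that depend only on whether `i ∈ S(v)` for `(v, i) ∈ Q`. -/
abbrev labelSpace (Q : Set (V × ℕ)) : MeasurableSpace (V → ℕ → Bool) :=
  MeasurableSpace.generateFrom {E | ∃ q ∈ Q, {ω : V → ℕ → Bool | ω q.1 q.2 = true} = E}

lemma labelSpace_mono (h : Q ⊆ R) : labelSpace Q ≤ labelSpace R :=
  MeasurableSpace.generateFrom_mono fun _ ⟨q, hq, hE⟩ => ⟨q, h hq, hE⟩

lemma measurableSet_mem_labels : MeasurableSet {ω : V → ℕ → Bool | i ∈ labels ω v} :=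
  measurableSet_eq_fun ((measurable_pi_apply i).comp (measurable_pi_apply v)) measurable_const

lemma labelSpace_le : labelSpace Q ≤ MeasurableSpace.pi := by
  refine MeasurableSpace.generateFrom_le ?_
  rintro _ ⟨q, -, rfl⟩
  exact measurableSet_mem_labels

lemma measurableSet_labelSpace_mem_labels (h : (v, i) ∈ Q) :
    MeasurableSet[labelSpace Q] {ω | i ∈ labels ω v} :=
  MeasurableSpace.measurableSet_generateFrom ⟨(v, i), h, rfl⟩

namespace IsLabelMeasure

lemma real_inter (hμ : IsLabelMeasure μ p₀ p) (hQR : Disjoint Q R)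
    (hE : MeasurableSet[labelSpace Q] E) (hF : MeasurableSet[labelSpace R] F) :
    μ.real (E ∩ F) = μ.real E * μ.real F := by
  have hindep : Indep (labelSpace Q) (labelSpace R) μ :=
    hμ.2.1.indep_generateFrom_of_disjoint (fun _ => measurableSet_mem_labels) Q R hQR
  simp [measureReal_def, Indep_iff _ _ _ |>.1 hindep E F hE hF]

lemma real_biInter (hμ : IsLabelMeasure μ p₀ p) {ι : Type*} {s : Finset ι}
    {Q : ι → Set (V × ℕ)} {E : ι → Set (V → ℕ → Bool)} (hQ : (s : Set ι).PairwiseDisjoint Q)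
    (hE : ∀ i ∈ s, MeasurableSet[labelSpace (Q i)] (E i)) :
    μ.real (⋂ i ∈ s, E i) = ∏ i ∈ s, μ.real (E i) := by
  classical
  have := hμ.1
  induction s using Finset.induction_on with
  | empty => simp
  | insert a s ha ih =>
    rw [Finset.coe_insert, pairwiseDisjoint_insert_of_notMem (by simpa using ha)] at hQ
    rw [Finset.forall_mem_insert] at hE
    rw [Finset.set_biInter_insert, Finset.prod_insert ha, ← ih hQ.1 hE.2]
    have hdisj : Disjoint (Q a) (⋃ i ∈ s, Q i) :=
      disjoint_iUnion₂_right.2 fun i hi => hQ.2 i hi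
    refine hμ.real_inter hdisj hE.1 (s.measurableSet_biInter fun i hi => ?_)
    exact labelSpace_mono (subset_biUnion_of_mem (u := Q) hi) _ (hE.2 i hi)

lemma real_zero_mem_labels (hμ : IsLabelMeasure μ p₀ p) (hp₀ : 0 ≤ p₀) :
    μ.real {ω | 0 ∈ labels ω v} = p₀ := by
  change (μ {ω | ω v 0 = true}).toReal = p₀
  rw [hμ.2.2, if_pos rfl, ENNReal.toReal_ofReal hp₀]

lemma real_mem_labels (hμ : IsLabelMeasure μ p₀ p) (hp : 0 ≤ p) (hi : i ≠ 0) :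
    μ.real {ω | i ∈ labels ω v} = p := by
  change (μ {ω | ω v i = true}).toReal = p
  rw [hμ.2.2, if_neg hi, ENNReal.toReal_ofReal hp]

lemma real_quietFrom (hμ : IsLabelMeasure μ p₀ p) (hp₀ : 0 ≤ p₀) (hp : 0 ≤ p) :
    μ.real {ω | QuietFrom (labels ω) k m v} = (1 - p₀) * (1 - p) ^ (m - k) := by
  have := hμ.1
  have hquiet : {ω : V → ℕ → Bool | QuietFrom (labels ω) k m v}
      = ⋂ j ∈ insert 0 (Finset.Ioc k m), {ω | j ∈ labels ω v}ᶜ := by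
    ext ω
    simp [QuietFrom]
  have hlater : ∀ j ∈ Finset.Ioc k m, μ.real {ω | j ∈ labels ω v}ᶜ = 1 - p := fun j hj => by
    rw [probReal_compl_eq_one_sub measurableSet_mem_labels,
      hμ.real_mem_labels hp (Nat.ne_zero_of_lt (Finset.mem_Ioc.1 hj).1)]
  rw [hquiet, hμ.real_biInter (Q := fun j => {(v, j)}), Finset.prod_insert (by simp),
    probReal_compl_eq_one_sub measurableSet_mem_labels, hμ.real_zero_mem_labels hp₀,
    Finset.prod_congr rfl hlater, Finset.prod_const, Nat.card_Ioc]
  · intro i _ j _ hij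
    simpa using hij
  · exact fun j _ => (measurableSet_labelSpace_mem_labels (mem_singleton (v, j))).compl

end IsLabelMeasure

variable {𝓜 : MeasurableSpace (V → ℕ → Bool)} {G : SimpleGraph V} {g : ℕ} {N : Set V}

lemma measurableSet_quietFrom (hv : ∀ j ≤ m, MeasurableSet[𝓜] {ω | j ∈ labels ω v}) :
    MeasurableSet[𝓜] {ω | QuietFrom (labels ω) k m v} := by
  simp only [QuietFrom, ofPred_and, ofPred_forall]
  exact (hv 0 m.zero_le).compl.inter <| .iInter fun j => .iInter fun _ => .iInter fun hj =>
    (hv j hj).compl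

lemma measurableSet_silent
    (h : ∀ j ≤ m, MeasurableSet[𝓜] {ω | BranchRelevant G (labels ω) j u v}) :
    MeasurableSet[𝓜] {ω | ∀ j ≤ m, ¬ BranchRelevant G (labels ω) j u v} := by
  simp only [ofPred_forall]
  exact .iInter fun j => .iInter fun hj => (h j hj).compl

lemma measurableSet_blueThrough (hv : ∀ j ≤ m, MeasurableSet[𝓜] {ω | j ∈ labels ω v})
    (hN : N.Countable)
    (hbranch : ∀ y ∈ N, ∀ j ≤ m, MeasurableSet[𝓜] {ω | BranchRelevant G (labels ω) j v y})
    (hx : x ∈ N) (hk : k ≤ m) :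
    MeasurableSet[𝓜] {ω | BlueThrough G (labels ω) N m v x k} := by
  simp only [BlueThrough, ofPred_and, ofPred_forall (ι := V), ofPred_forall (ι := _ ∈ N),
    ofPred_forall (ι := _ ≠ x)]
  exact (hbranch x hx k hk).inter <| (measurableSet_quietFrom hv).inter <|
    .biInter hN fun y hy => .iInter fun _ => measurableSet_silent (hbranch y hy)

lemma measurableSet_blueVia (hv : ∀ j ≤ n, MeasurableSet[𝓜] {ω | j ∈ labels ω v})
    (hN : N.Countable)
    (hbranch : ∀ y ∈ N, ∀ j ≤ n, MeasurableSet[𝓜] {ω | BranchRelevant G (labels ω) j v y}) :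
    MeasurableSet[𝓜] {ω | BlueVia G (labels ω) N n v} := by
  have hunion : {ω | BlueVia G (labels ω) N n v}
      = ⋃ x ∈ N, ⋃ k ≤ n, {ω | BlueThrough G (labels ω) N n v x k} := by
    ext ω
    simp [blueVia_iff_blueThrough]
  rw [hunion]
  exact .biUnion hN fun x hx => .iUnion fun k => .iUnion fun hk =>
    measurableSet_blueThrough hv hN hbranch hx hk

lemma measurableSet_blueVia_neighborSet_sdiff (hg : (g : ℕ∞) ≤ G.egirth)
    (hG : (G.neighborSet v).Countable) (hn : n + 2 < g) (huv : G.Adj u v)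
    (hbranch : ∀ y, G.Adj v y → ∀ j ≤ n, MeasurableSet[labelSpace (branch G j v y ×ˢ Iic j)]
      {ω | BranchRelevant G (labels ω) j v y}) :
    MeasurableSet[labelSpace (branch G (n + 1) u v ×ˢ Iic n)]
      {ω | BlueVia G (labels ω) (G.neighborSet v \ {u}) n v} := by
  refine measurableSet_blueVia
    (fun j hj => measurableSet_labelSpace_mem_labels ⟨self_mem_branch huv.ne, hj⟩)
    (hG.mono sdiff_subset) fun y ⟨hvy, hyu⟩ j hj => ?_
  have hsub : branch G j v y ⊆ branch G (n + 1) u v :=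
    (branch_subset_branch hg (by omega) huv hvy hyu).trans (branch_mono (by omega))
  exact labelSpace_mono (prod_mono hsub (Iic_subset_Iic.2 hj)) _ (hbranch y hvy j hj)

lemma measurableSet_branchRelevant (hg : (g : ℕ∞) ≤ G.egirth)
    (hG : ∀ v, (G.neighborSet v).Countable) (hk : k + 1 < g) (huv : G.Adj u v) :
    MeasurableSet[labelSpace (branch G k u v ×ˢ Iic k)]
      {ω | BranchRelevant G (labels ω) k u v} := by
  induction k using Nat.strong_induction_on generalizing u v with
  | _ k ih =>
    have hv : MeasurableSet[labelSpace (branch G k u v ×ˢ Iic k)] {ω | k ∈ labels ω v} :=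
      measurableSet_labelSpace_mem_labels ⟨self_mem_branch huv.ne, self_mem_Iic⟩
    cases k with
    | zero => simpa only [BranchRelevant, relevantVia_zero] using hv
    | succ n =>
      simp only [BranchRelevant, relevantVia_succ, ofPred_and]
      have hblue := measurableSet_blueVia_neighborSet_sdiff hg (hG v) hk huv
        fun y hvy j hj => ih j (by omega) (by omega) hvy
      exact hv.inter (labelSpace_mono (prod_mono_right (Iic_subset_Iic.2 n.le_succ)) _ hblue)

lemma measurableSet_branchRelevant_of_le (hg : (g : ℕ∞) ≤ G.egirth)
    (hG : ∀ v, (G.neighborSet v).Countable) (hm : m + 1 < g) (hk : k ≤ m) (huv : G.Adj u v) :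
    MeasurableSet[labelSpace (branch G m u v ×ˢ Iic m)]
      {ω | BranchRelevant G (labels ω) k u v} :=
  labelSpace_mono (prod_mono (branch_mono hk) (Iic_subset_Iic.2 hk)) _
    (measurableSet_branchRelevant hg hG (by omega) huv)

end LabelSpace

section Probability

variable {μ : Measure (V → ℕ → Bool)} {p₀ p : ℝ} {G : SimpleGraph V} {g r k m n : ℕ}
  {N : Set V} {u v x y : V} {f : ℕ → ℝ}

/-- The probability that the branch at a given neighbour of `v` produces a relevant label `k ≤ n`
and `v` stays quiet until time `m`, when each `k` is relevant in a branch with probability `f k`. -/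
def sourceProb (p₀ p : ℝ) (f : ℕ → ℝ) (n m : ℕ) : ℝ :=
  ∑ k ∈ Finset.range (n + 1), (1 - p₀) * (1 - p) ^ (m - k) * f k

/-- The probability that a branch produces no relevant label up to time `m`, when each `k` is
relevant in it with probability `f k`. -/
def silentProb (f : ℕ → ℝ) (m : ℕ) : ℝ :=
  1 - ∑ k ∈ Finset.range (m + 1), f k

lemma sourceProb_succ_right : sourceProb p₀ p f n (n + 1) = (1 - p) * sourceProb p₀ p f n n := by
  rw [sourceProb, sourceProb, Finset.mul_sum]
  refine Finset.sum_congr rfl fun k hk => ?_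
  rw [Nat.succ_sub (Finset.mem_range_succ_iff.1 hk), pow_succ]
  ring

lemma silentProb_succ : silentProb f (n + 1) = silentProb f n - f (n + 1) := by
  rw [silentProb, silentProb, Finset.sum_range_succ _ (n + 1)]
  ring

lemma sourceProb_pos (hp₀ : p₀ < 1) (hp : p < 1) (h0 : 0 < f 0) (hf : ∀ k, 0 ≤ f k) :
    0 < sourceProb p₀ p f n m := by
  have hquiet (k : ℕ) : 0 < (1 - p₀) * (1 - p) ^ (m - k) :=
    mul_pos (sub_pos.2 hp₀) (pow_pos (sub_pos.2 hp) _)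
  exact Finset.sum_pos' (fun k _ => mul_nonneg (hquiet k).le (hf k))
    ⟨0, by simp, mul_pos (hquiet 0) h0⟩

lemma setOf_blueThrough [DecidableEq V] {N : Finset V} :
    {ω | BlueThrough G (labels ω) N m v x k} = {ω | QuietFrom (labels ω) k m v} ∩
      ({ω | BranchRelevant G (labels ω) k v x} ∩
        ⋂ y ∈ N.erase x, {ω | ∀ j ≤ m, ¬ BranchRelevant G (labels ω) j v y}) := by
  ext ω
  simp only [mem_inter_iff, mem_iInter, mem_ofPred_eq, Finset.mem_erase]
  exact ⟨fun ⟨hxk, hquiet, hsilent⟩ => ⟨hquiet, hxk, fun y hy => hsilent y hy.2 hy.1⟩,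
    fun ⟨hquiet, hxk, hsilent⟩ => ⟨hxk, hquiet, fun y hy hyx => hsilent y ⟨hyx, hy⟩⟩⟩

namespace IsLabelMeasure

lemma real_silent (hμ : IsLabelMeasure μ p₀ p)
    (h : ∀ j ≤ m, MeasurableSet {ω | BranchRelevant G (labels ω) j u v})
    (hf : ∀ j ≤ m, μ.real {ω | BranchRelevant G (labels ω) j u v} = f j) :
    μ.real {ω | ∀ j ≤ m, ¬ BranchRelevant G (labels ω) j u v} = silentProb f m := by
  have := hμ.1
  simp only [← Finset.mem_range_succ_iff] at h hf ⊢
  have hcompl : {ω | ∀ j ∈ Finset.range (m + 1), ¬ BranchRelevant G (labels ω) j u v}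
      = (⋃ j ∈ Finset.range (m + 1), {ω | BranchRelevant G (labels ω) j u v})ᶜ := by
    ext ω
    simp
  rw [hcompl, probReal_compl_eq_one_sub (Finset.measurableSet_biUnion _ h),
    measureReal_biUnion_finset _ h, silentProb, Finset.sum_congr rfl hf]
  exact fun i _ j _ hij => Set.disjoint_left.2 fun ω hi hj => hij (RelevantVia.eq hi hj)

lemma silentProb_pos (hμ : IsLabelMeasure μ p₀ p) (hp₀ : p₀ ∈ Ico 0 1) (hp : p ∈ Ico 0 1)
    (h : ∀ j ≤ m, MeasurableSet {ω | BranchRelevant G (labels ω) j u v})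
    (hf : ∀ j ≤ m, μ.real {ω | BranchRelevant G (labels ω) j u v} = f j) :
    0 < silentProb f m := by
  have := hμ.1
  rw [← hμ.real_silent h hf]
  refine lt_of_lt_of_le ?_ (measureReal_mono (s₁ := {ω | QuietFrom (labels ω) 0 m v}) ?_)
  · rw [hμ.real_quietFrom hp₀.1 hp.1]
    exact mul_pos (sub_pos.2 hp₀.2) (pow_pos (sub_pos.2 hp.2) _)
  · rintro ω ⟨h0, hquiet⟩ j hj hr
    rcases j.eq_zero_or_pos with rfl | hpos
    exacts [h0 hr.mem, hquiet j hpos hj hr.mem]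

lemma real_forall_silent (hμ : IsLabelMeasure μ p₀ p) (hg : (g : ℕ∞) ≤ G.egirth)
    (hG : ∀ v, (G.neighborSet v).Countable) (hm : 2 * (m + 1) < g) {N : Finset V}
    (hN : ∀ y ∈ N, G.Adj v y)
    (hf : ∀ y ∈ N, ∀ j ≤ m, μ.real {ω | BranchRelevant G (labels ω) j v y} = f j) :
    μ.real (⋂ y ∈ N, {ω | ∀ j ≤ m, ¬ BranchRelevant G (labels ω) j v y})
      = silentProb f m ^ N.card := by
  have hmeas : ∀ y ∈ N, ∀ j ≤ m, MeasurableSet[labelSpace (branch G m v y ×ˢ Iic m)]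
      {ω | BranchRelevant G (labels ω) j v y} := fun y hy j hj =>
    measurableSet_branchRelevant_of_le hg hG (by omega) hj (hN y hy)
  rw [hμ.real_biInter (Q := fun y => branch G m v y ×ˢ Iic m)
    (fun y hy z hz hyz => disjoint_prod.2 (.inl (disjoint_branch hg hm (hN y hy) (hN z hz) hyz)))
    (fun y hy => measurableSet_silent (hmeas y hy)), Finset.prod_eq_pow_card]
  exact fun y hy => hμ.real_silent (fun j hj => labelSpace_le _ (hmeas y hy j hj)) (hf y hy)

lemma real_quietFrom_inter (hμ : IsLabelMeasure μ p₀ p) (hp₀ : 0 ≤ p₀) (hp : 0 ≤ p)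
    {E : Set (V → ℕ → Bool)}
    (hE : MeasurableSet[labelSpace (⋃ y ∈ N, branch G m v y ×ˢ Iic m)] E) :
    μ.real ({ω | QuietFrom (labels ω) k m v} ∩ E)
      = (1 - p₀) * (1 - p) ^ (m - k) * μ.real E := by
  have hdisj : Disjoint ({v} ×ˢ Iic m) (⋃ y ∈ N, branch G m v y ×ˢ Iic m) :=
    disjoint_iUnion₂_right.2 fun y _ =>
      disjoint_prod.2 (.inl (disjoint_singleton_left.2 notMem_branch))
  have hquiet : MeasurableSet[labelSpace ({v} ×ˢ Iic m)] {ω | QuietFrom (labels ω) k m v} :=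
    measurableSet_quietFrom fun j hj => measurableSet_labelSpace_mem_labels ⟨mem_singleton v, hj⟩
  rw [hμ.real_inter hdisj hquiet hE, hμ.real_quietFrom hp₀ hp]

lemma real_blueThrough (hμ : IsLabelMeasure μ p₀ p) (hp₀ : 0 ≤ p₀) (hp : 0 ≤ p)
    (hg : (g : ℕ∞) ≤ G.egirth) (hG : ∀ v, (G.neighborSet v).Countable) (hm : 2 * (m + 1) < g)
    {N : Finset V} (hN : ∀ y ∈ N, G.Adj v y)
    (hf : ∀ y ∈ N, ∀ j ≤ m, μ.real {ω | BranchRelevant G (labels ω) j v y} = f j)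
    (hx : x ∈ N) (hk : k ≤ m) :
    μ.real {ω | BlueThrough G (labels ω) N m v x k}
      = (1 - p₀) * (1 - p) ^ (m - k) * f k * silentProb f m ^ (N.card - 1) := by
  classical
  let Q (y : V) : Set (V × ℕ) := branch G m v y ×ˢ Iic m
  let others : Set (V → ℕ → Bool) :=
    ⋂ y ∈ N.erase x, {ω | ∀ j ≤ m, ¬ BranchRelevant G (labels ω) j v y}
  have hsub : ∀ y ∈ N.erase x, y ∈ N := fun _ => Finset.mem_of_mem_erase
  have hmeas : ∀ y ∈ N, ∀ j ≤ m,
      MeasurableSet[labelSpace (Q y)] {ω | BranchRelevant G (labels ω) j v y} := fun y hy j hj =>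
    measurableSet_branchRelevant_of_le hg hG (by omega) hj (hN y hy)
  have hothers : MeasurableSet[labelSpace (⋃ y ∈ N.erase x, Q y)] others :=
    (N.erase x).measurableSet_biInter fun y hy =>
      labelSpace_mono (subset_biUnion_of_mem (u := Q) hy) _
        (measurableSet_silent (hmeas y (hsub y hy)))
  have hdisj : Disjoint (Q x) (⋃ y ∈ N.erase x, Q y) := disjoint_iUnion₂_right.2 fun y hy =>
    disjoint_prod.2 <| .inl <|
      disjoint_branch hg hm (hN x hx) (hN y (hsub y hy)) (Finset.ne_of_mem_erase hy).symm
  have hbranches : MeasurableSet[labelSpace (⋃ y ∈ N, Q y)]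
      ({ω | BranchRelevant G (labels ω) k v x} ∩ others) :=
    (labelSpace_mono (subset_biUnion_of_mem (u := Q) hx) _ (hmeas x hx k hk)).inter
      (labelSpace_mono (biUnion_subset_biUnion_left hsub) _ hothers)
  rw [setOf_blueThrough, hμ.real_quietFrom_inter hp₀ hp (N := N) hbranches,
    hμ.real_inter hdisj (hmeas x hx k hk) hothers, hf x hx k hk,
    hμ.real_forall_silent hg hG hm (fun y hy => hN y (hsub y hy)) (fun y hy => hf y (hsub y hy)),
    Finset.card_erase_of_mem hx, mul_assoc _ (f k)]

lemma real_exists_blueThrough (hμ : IsLabelMeasure μ p₀ p) (hp₀ : 0 ≤ p₀) (hp : 0 ≤ p)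
    (hg : (g : ℕ∞) ≤ G.egirth) (hG : ∀ v, (G.neighborSet v).Countable) (hnm : n ≤ m)
    (hm : 2 * (m + 1) < g) (hN : N.Finite) (hNv : N ⊆ G.neighborSet v)
    (hf : ∀ y ∈ N, ∀ j ≤ m, μ.real {ω | BranchRelevant G (labels ω) j v y} = f j) :
    μ.real {ω | ∃ x ∈ N, ∃ k ≤ n, BlueThrough G (labels ω) N m v x k}
      = N.ncard * sourceProb p₀ p f n m * silentProb f m ^ (N.ncard - 1) := by
  have := hμ.1
  lift N to Finset V using hN
  have hle : ∀ k ∈ Finset.range (n + 1), k ≤ m := fun k hk =>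
    (Finset.mem_range_succ_iff.1 hk).trans hnm
  have hmeas : ∀ q ∈ N ×ˢ Finset.range (n + 1),
      MeasurableSet {ω | BlueThrough G (labels ω) N m v q.1 q.2} := fun q hq => by
    rw [Finset.mem_product] at hq
    exact measurableSet_blueThrough (fun _ _ => measurableSet_mem_labels) N.countable_toSet
      (fun y hy j hj => labelSpace_le _ (measurableSet_branchRelevant hg hG (by omega) (hNv hy)))
      hq.1 (hle _ hq.2)
  have hunion : {ω | ∃ x ∈ N, ∃ k ≤ n, BlueThrough G (labels ω) N m v x k}
      = ⋃ q ∈ N ×ˢ Finset.range (n + 1), {ω | BlueThrough G (labels ω) N m v q.1 q.2} := by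
    ext ω
    simp only [mem_ofPred_eq, mem_iUnion, Finset.mem_product, Finset.mem_range_succ_iff,
      Prod.exists, exists_prop]
    tauto
  have hdisj : ((N ×ˢ Finset.range (n + 1) : Finset (V × ℕ)) : Set (V × ℕ)).PairwiseDisjoint
      fun q => {ω | BlueThrough G (labels ω) N m v q.1 q.2} := by
    rintro ⟨x, k⟩ hq ⟨y, l⟩ - hne
    rw [Finset.mem_coe, Finset.mem_product] at hq
    refine Set.disjoint_left.2 fun ω ⟨hxk, _, _⟩ ⟨hyl, _, hsilent⟩ => hne ?_
    obtain rfl : x = y := by_contra fun hxy => hsilent x hq.1 hxy k (hle k hq.2) hxk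
    exact congrArg (Prod.mk x) (hxk.eq hyl)
  simp only [Finset.mem_coe, ncard_coe_finset]
  rw [hunion, measureReal_biUnion_finset hdisj hmeas, Finset.sum_product,
    Finset.sum_congr rfl fun x hx => Finset.sum_congr rfl fun k hk =>
      hμ.real_blueThrough hp₀ hp hg hG hm hNv hf hx (hle k hk),
    Finset.sum_const, nsmul_eq_mul, ← Finset.sum_mul, sourceProb, mul_assoc]

lemma real_blueVia (hμ : IsLabelMeasure μ p₀ p) (hp₀ : 0 ≤ p₀) (hp : 0 ≤ p)
    (hg : (g : ℕ∞) ≤ G.egirth) (hG : ∀ v, (G.neighborSet v).Countable) (hn : 2 * (n + 1) < g)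
    (hN : N.Finite) (hNv : N ⊆ G.neighborSet v)
    (hf : ∀ y ∈ N, ∀ j ≤ n, μ.real {ω | BranchRelevant G (labels ω) j v y} = f j) :
    μ.real {ω | BlueVia G (labels ω) N n v}
      = N.ncard * sourceProb p₀ p f n n * silentProb f n ^ (N.ncard - 1) := by
  simp only [blueVia_iff_blueThrough]
  exact hμ.real_exists_blueThrough hp₀ hp hg hG le_rfl hn hN hNv hf

lemma real_branchRelevant_zero (hμ : IsLabelMeasure μ p₀ p) (hp₀ : 0 ≤ p₀) :
    μ.real {ω | BranchRelevant G (labels ω) 0 u v} = p₀ := by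
  simp only [BranchRelevant, relevantVia_zero]
  exact hμ.real_zero_mem_labels hp₀

lemma real_branchRelevant_succ (hμ : IsLabelMeasure μ p₀ p) (hp : 0 ≤ p)
    (hg : (g : ℕ∞) ≤ G.egirth) (hG : ∀ v, (G.neighborSet v).Countable) (hn : n + 2 < g)
    (huv : G.Adj u v) :
    μ.real {ω | BranchRelevant G (labels ω) (n + 1) u v}
      = p * μ.real {ω | BlueVia G (labels ω) (G.neighborSet v \ {u}) n v} := by
  simp only [BranchRelevant, relevantVia_succ, ofPred_and]
  have hblue := measurableSet_blueVia_neighborSet_sdiff hg (hG v) hn huv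
    fun y hvy j hj => measurableSet_branchRelevant hg hG (by omega) hvy
  have hdisj : Disjoint {(v, n + 1)} (branch G (n + 1) u v ×ˢ Iic n) := by
    simp
  rw [hμ.real_inter hdisj (measurableSet_labelSpace_mem_labels (mem_singleton _)) hblue,
    hμ.real_mem_labels hp n.succ_ne_zero]

lemma real_blueVia_neighborSet_sdiff (hμ : IsLabelMeasure μ p₀ p) (hp₀ : 0 ≤ p₀) (hp : 0 ≤ p)
    (hg : (g : ℕ∞) ≤ G.egirth) (hfin : ∀ v, (G.neighborSet v).Finite) (hreg : IsRegular G r)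
    (hn : 2 * (n + 1) < g) (huv : G.Adj u v)
    (hf : ∀ y, G.Adj v y → ∀ j ≤ n, μ.real {ω | BranchRelevant G (labels ω) j v y} = f j) :
    μ.real {ω | BlueVia G (labels ω) (G.neighborSet v \ {u}) n v}
      = (r - 1 : ℕ) * sourceProb p₀ p f n n * silentProb f n ^ (r - 1 - 1) := by
  rw [← hreg v, ← ncard_sdiff_singleton_of_mem (show u ∈ G.neighborSet v from huv.symm)]
  exact hμ.real_blueVia hp₀ hp hg (fun w => (hfin w).countable) hn ((hfin v).sdiff) sdiff_subset
    fun y hy => hf y hy.1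

lemma real_branchRelevant_eq (hμ : IsLabelMeasure μ p₀ p) (hp₀ : 0 ≤ p₀) (hp : 0 ≤ p)
    (hg : (g : ℕ∞) ≤ G.egirth) (hfin : ∀ v, (G.neighborSet v).Finite) (hreg : IsRegular G r)
    (hk : 2 * k < g) (huv : G.Adj u v) (hxy : G.Adj x y) :
    μ.real {ω | BranchRelevant G (labels ω) k u v}
      = μ.real {ω | BranchRelevant G (labels ω) k x y} := by
  induction k using Nat.strong_induction_on generalizing u v x y with
  | _ k ih =>
    cases k with
    | zero => rw [hμ.real_branchRelevant_zero hp₀, hμ.real_branchRelevant_zero hp₀]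
    | succ n =>
      have hf : ∀ z w, G.Adj z w → ∀ j ≤ n, μ.real {ω | BranchRelevant G (labels ω) j z w}
          = μ.real {ω | BranchRelevant G (labels ω) j u v} := fun z w hzw j hj =>
        ih j (by omega) (by omega) hzw huv
      have hG : ∀ v, (G.neighborSet v).Countable := fun w => (hfin w).countable
      rw [hμ.real_branchRelevant_succ hp hg hG (by omega) huv,
        hμ.real_branchRelevant_succ hp hg hG (by omega) hxy,
        hμ.real_blueVia_neighborSet_sdiff hp₀ hp hg hfin hreg hk huv (hf v),
        hμ.real_blueVia_neighborSet_sdiff hp₀ hp hg hfin hreg hk hxy (hf y)]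

lemma real_bEv (hμ : IsLabelMeasure μ p₀ p) (hp₀ : 0 ≤ p₀) (hp : 0 ≤ p)
    (hg : (g : ℕ∞) ≤ G.egirth) (hfin : ∀ v, (G.neighborSet v).Finite) (hreg : IsRegular G r)
    (hn : 2 * (n + 1) < g)
    (hf : ∀ y, G.Adj v y → ∀ j ≤ n, μ.real {ω | BranchRelevant G (labels ω) j v y} = f j) :
    μ.real (BEv G n v) = r * sourceProb p₀ p f n n * silentProb f n ^ (r - 1) := by
  rw [← hreg v]
  simp only [BEv, mem_blue_iff_blueVia]
  exact hμ.real_blueVia hp₀ hp hg (fun w => (hfin w).countable) hn (hfin v) Subset.rfl hf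

lemma real_bEv_inter_bEv_succ (hμ : IsLabelMeasure μ p₀ p) (hp₀ : 0 ≤ p₀) (hp : 0 ≤ p)
    (hg : (g : ℕ∞) ≤ G.egirth) (hfin : ∀ v, (G.neighborSet v).Finite) (hreg : IsRegular G r)
    (hn : 2 * (n + 2) < g)
    (hf : ∀ y, G.Adj v y → ∀ j ≤ n + 1,
      μ.real {ω | BranchRelevant G (labels ω) j v y} = f j) :
    μ.real (BEv G n v ∩ BEv G (n + 1) v)
      = r * ((1 - p) * sourceProb p₀ p f n n) * (silentProb f n - f (n + 1)) ^ (r - 1) := by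
  rw [← hreg v, ← sourceProb_succ_right, ← silentProb_succ]
  simp only [BEv, mem_blue_iff_blueVia, ← ofPred_and, blueVia_and_blueVia_succ_iff]
  exact hμ.real_exists_blueThrough hp₀ hp hg (fun w => (hfin w).countable) n.le_succ hn (hfin v)
    Subset.rfl hf

lemma real_bEv_inter_bEv_of_adj (hμ : IsLabelMeasure μ p₀ p) (hg : (g : ℕ∞) ≤ G.egirth)
    (hG : ∀ v, (G.neighborSet v).Countable) (hn : 2 * n + 3 < g) (huv : G.Adj u v) :
    μ.real (BEv G n u ∩ BEv G n v)
      = μ.real {ω | BlueVia G (labels ω) (G.neighborSet u \ {v}) n u}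
        * μ.real {ω | BlueVia G (labels ω) (G.neighborSet v \ {u}) n v} := by
  simp only [BEv, ← ofPred_and, mem_blue_and_mem_blue_iff huv]
  have hblue {x y : V} (hxy : G.Adj x y) :=
    measurableSet_blueVia_neighborSet_sdiff (n := n) hg (hG y) (by omega) hxy
      fun z hyz j hj => measurableSet_branchRelevant hg hG (by omega) hyz
  exact hμ.real_inter
    (disjoint_prod.2 (.inl (disjoint_branch_symm hg (by omega) huv.symm))) (hblue huv.symm)
    (hblue huv)

end IsLabelMeasure

lemma measurableSet_bEv (hg : (g : ℕ∞) ≤ G.egirth) (hG : ∀ v, (G.neighborSet v).Countable)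
    (hn : n + 1 < g) : MeasurableSet (BEv G n v) := by
  simp only [BEv, mem_blue_iff_blueVia]
  exact measurableSet_blueVia (fun _ _ => measurableSet_mem_labels) (hG v) fun y hvy j hj =>
    labelSpace_le _ (measurableSet_branchRelevant hg hG (by omega) hvy)

end Probability

lemma blue_ratio_eq {r : ℕ} {p A q β : ℝ} (hr : r ≠ 0) (hA : A ≠ 0) (hq : q ≠ 0)
    (hβ : β = (r - 1 : ℕ) * A * q ^ (r - 1 - 1)) :
    r * ((1 - p) * A) * (q - p * β) ^ (r - 1) / (r * A * q ^ (r - 1))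
      = (1 - p) * (1 - r * p * (β * β) / ((r - 1) * (r * A * q ^ (r - 1)))) ^ (r - 1) := by
  have hr' : (r : ℝ) ≠ 0 := Nat.cast_ne_zero.2 hr
  have hfrac : ((q - p * β) / q) ^ (r - 1)
      = (1 - r * p * (β * β) / ((r - 1) * (r * A * q ^ (r - 1)))) ^ (r - 1) := by
    rcases eq_or_ne (r - 1) 0 with hd | hd
    · rw [hd, pow_zero, pow_zero]
    have : (r : ℝ) - 1 ≠ 0 := by
      rwa [← Nat.cast_pred (Nat.pos_of_ne_zero hr), Nat.cast_ne_zero]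
    have hpow : q ^ (r - 1) = q ^ (r - 1 - 1) * q := (pow_sub_one_mul hd q).symm
    rw [hpow, hβ, Nat.cast_pred (Nat.pos_of_ne_zero hr)]
    field_simp
  rw [← hfrac, div_pow]
  field_simp

lemma cond_real_eq_div {Ω : Type*} {mΩ : MeasurableSpace Ω} (μ : Measure Ω) {s : Set Ω}
    (hs : MeasurableSet s) (t : Set Ω) : (μ[|s]).real t = μ.real (s ∩ t) / μ.real s := by
  simp [measureReal_def, cond_apply hs, div_eq_inv_mul]

theorem cond_prob_blue_given_blue_general (r g : ℕ) (G : SimpleGraph V)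
    (hfin : ∀ v, (G.neighborSet v).Finite) (hreg : IsRegular G r) (hg : (g : ℕ∞) ≤ G.egirth)
    (p₀ p : ℝ) (hp₀ : p₀ ∈ Ioo 0 1) (hp : p ∈ Ico 0 1)
    (μ : Measure (V → ℕ → Bool)) (hμ : IsLabelMeasure μ p₀ p)
    (n : ℕ) (hn : 2 * (n + 2) < g) (u a c : V) (hac : G.Adj a c) :
    (μ[|BEv G n u]).real (BEv G (n + 1) u)
      = (1 - p) * (1 - r * p * μ.real (BEv G n a ∩ BEv G n c)
          / ((r - 1) * μ.real (BEv G n a))) ^ (r - 1) := by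
  have hG : ∀ v, (G.neighborSet v).Countable := fun v => (hfin v).countable
  have hr : r ≠ 0 := hreg a ▸ (ncard_pos (hfin a)).2 ⟨c, hac⟩ |>.ne'
  let f (k : ℕ) : ℝ := μ.real {ω | BranchRelevant G (labels ω) k a c}
  let A : ℝ := sourceProb p₀ p f n n
  let q : ℝ := silentProb f n
  let β : ℝ := (r - 1 : ℕ) * A * q ^ (r - 1 - 1)
  have hf {x y : V} (hxy : G.Adj x y) (k : ℕ) (hk : k ≤ n + 1) :
      μ.real {ω | BranchRelevant G (labels ω) k x y} = f k :=
    hμ.real_branchRelevant_eq hp₀.1.le hp.1 hg hfin hreg (by omega) hxy hac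
  have hf' {x y : V} (hxy : G.Adj x y) (k : ℕ) (hk : k ≤ n) := hf hxy k (hk.trans n.le_succ)
  have hA : 0 < A := sourceProb_pos hp₀.2 hp.2
    (hp₀.1.trans_eq (hμ.real_branchRelevant_zero hp₀.1.le).symm) fun k => measureReal_nonneg
  have hq : 0 < q := hμ.silentProb_pos (Ioo_subset_Ico_self hp₀) hp
    (fun j hj => labelSpace_le _ (measurableSet_branchRelevant hg hG (by omega) hac)) (hf' hac)
  have hβ {x y : V} (hxy : G.Adj x y) :
      μ.real {ω | BlueVia G (labels ω) (G.neighborSet y \ {x}) n y} = β :=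
    hμ.real_blueVia_neighborSet_sdiff hp₀.1.le hp.1 hg hfin hreg (by omega) hxy fun _ => hf'
  have hfβ : f (n + 1) = p * β :=
    hβ hac ▸ hμ.real_branchRelevant_succ hp.1 hg hG (by omega) hac
  have hb (v : V) : μ.real (BEv G n v) = r * A * q ^ (r - 1) :=
    hμ.real_bEv hp₀.1.le hp.1 hg hfin hreg (by omega) fun _ => hf'
  have hbb : μ.real (BEv G n u ∩ BEv G (n + 1) u)
      = r * ((1 - p) * A) * (q - p * β) ^ (r - 1) :=
    hfβ ▸ hμ.real_bEv_inter_bEv_succ hp₀.1.le hp.1 hg hfin hreg hn fun _ => hf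
  have ht : μ.real (BEv G n a ∩ BEv G n c) = β * β := by
    rw [hμ.real_bEv_inter_bEv_of_adj hg hG (by omega) hac, hβ hac.symm, hβ hac]
  rw [cond_real_eq_div μ (measurableSet_bEv hg hG (by omega)), hbb, hb, hb, ht]
  exact blue_ratio_eq hr hA.ne' hq.ne' rfl

/-- `P(u ∈ B_i | u ∈ B_{i−1}) = (1−p)·(1 − r·p·t_{i−1}/((r−1)·b_{i−1}))^{r−1}`,
where `b_{i−1}` and `t_{i−1}` are computed from any vertex `a` and neighbour `c`. -/
theorem cond_prob_blue_given_blue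
    [Fintype V] (r g : ℕ) (G : SimpleGraph V)
    (hreg : IsRegular G r) (hg : (g : ℕ∞) ≤ G.egirth)
    (p₀ p : ℝ) (hp₀ : p₀ ∈ Ioo (0 : ℝ) 1) (hp : p ∈ Ioo (0 : ℝ) 1)
    (μ : Measure (V → ℕ → Bool)) (hμ : IsLabelMeasure μ p₀ p)
    (i : ℕ) (hi : 1 ≤ i) (hi1 : 2 * i < g - 3) (hi2 : 2 * (i + 2) < g - 2)
    (u a c : V) (hac : G.Adj a c) :
    (μ[|BEv G (i - 1) u] (BEv G i u)).toReal
      = (1 - p) * (1 - r * p * (μ (BEv G (i - 1) a ∩ BEv G (i - 1) c)).toReal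
          / (((r : ℝ) - 1) * (μ (BEv G (i - 1) a)).toReal)) ^ (r - 1) := by
  obtain ⟨n, rfl⟩ := Nat.exists_eq_add_of_le' hi
  exact cond_prob_blue_given_blue_general r g G (fun _ => toFinite _) hreg hg p₀ p hp₀
    (Ioo_subset_Ico_self hp) μ hμ n (by omega) u a c hac

end InducedForest
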